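/- Let (g, μ, γ) be a finite dimensional Lie bialgebra, and let {·,·} be the 'big bracket' on Λ(g ⊕ g*) determined by the canonical pairing. Then g and g* are abelian with respect to {·,·}, and (g, g*, μ, γ) is a Lie bialgebra if and only if {θ, θ} = 0 where θ = μ + γ ∈ Λ³(g ⊕ g*); equivalently {μ,μ} = {γ,γ} = {μ,γ} = 0, where {μ,μ}=0 is the Jacobi identity for the bracket μ, {γ,γ}=0 is the Jacobi identity for the cobracket γ* on g*, and {μ,γ}=0 is the 1-cocycle condition on γ. -/

import Mathlib

open ExteriorAlgebra

/-- The degree-`k` part of the exterior algebra `Λ(g ⊕ g*)`. -/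
noncomputable def bbGrade (G : Type*) [AddCommGroup G] [Module ℝ G] (k : ℕ) :
    Submodule ℝ (ExteriorAlgebra ℝ (G × Module.Dual ℝ G)) :=
  (LinearMap.range (ExteriorAlgebra.ι ℝ :
    G × Module.Dual ℝ G →ₗ[ℝ] ExteriorAlgebra ℝ (G × Module.Dual ℝ G))) ^ k

/-!
An element `m` of degree three defines the derived bracket `⟦u, v⟧ = {{m, u}, v}` on `g ⊕ g*`,
which is skew-symmetric and leaves the canonical pairing invariant. Applying the graded Jacobi
identity three times shows that

  `{{{{m, m}, u}, v}, w} = 2 (⟦⟦u, v⟧, w⟧ + ⟦v, ⟦u, w⟧⟧ - ⟦u, ⟦v, w⟧⟧)`.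

Bracketing with `u ∈ g ⊕ g*` is contraction with `u`, and by Euler's identity an element of
positive degree all of whose contractions vanish is zero. Hence `{m, m} = 0` if and only if `⟦·, ·⟧`
satisfies the Jacobi identity.

For `θ = μ + γ` the derived bracket is that of the Drinfeld double. Paired with a fourth vector, its
Jacobi identity asserts the vanishing of a skew-symmetric quadrilinear form on `g ⊕ g*`. With all
four arguments in `g`, or all in `g*`, this form is zero anyway; with three, two or one of them in
`g` it is the defect of the Jacobi identity of the bracket, of the cocycle condition, and of the
Jacobi identity of the cobracket, respectively. The cases `γ = 0` and `μ = 0` identify `{μ, μ} = 0`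
and `{γ, γ} = 0` with the two Jacobi identities, and `{μ, γ} = 0` follows by polarizing `{θ, θ}`.
-/

open CliffordAlgebra (contractLeft contractLeft_ι contractLeft_ι_mul contractLeft_algebraMap
  contractLeft_comm)

section Contraction

variable {R M : Type*} [CommRing R] [AddCommGroup M] [Module R M]

theorem contractLeft_mem_exteriorPower (d : Module.Dual R M) {k : ℕ} {x : ExteriorAlgebra R M}
    (hx : x ∈ ⋀[R]^(k + 1) M) : contractLeft d x ∈ ⋀[R]^k M := by
  induction k generalizing x with
  | zero =>
    rw [zero_add, exteriorPower, pow_one] at hx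
    obtain ⟨v, rfl⟩ := hx
    rw [contractLeft_ι, exteriorPower, pow_zero]
    exact Submodule.algebraMap_mem _
  | succ k ih =>
    rw [exteriorPower, pow_succ'] at hx
    induction hx using Submodule.mul_induction_on' with
    | mem_mul_mem _ hv y hy =>
      obtain ⟨v, rfl⟩ := hv
      rw [contractLeft_ι_mul]
      refine sub_mem (Submodule.smul_mem _ _ hy) ?_
      rw [exteriorPower, pow_succ']
      exact Submodule.mul_mem_mul ⟨v, rfl⟩ (ih hy)
    | add _ _ _ _ hy hz => exact map_add (contractLeft d) _ _ ▸ add_mem hy hz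

theorem contractLeft_contractLeft_ι_mul_ι_mul_ι {d d' : Module.Dual R M} {u v : M} (w : M)
    (hu : d u = 0) (hv : d v = 0) (hu' : d' u = 0) (hv' : d' v = 0) :
    contractLeft d (contractLeft d' (ι R u * ι R v * ι R w)) = 0 := by
  simp [mul_assoc, contractLeft_ι_mul, contractLeft_ι, hu, hv, hu', hv',
    Algebra.algebraMap_eq_smul_one]

theorem sum_ι_mul_contractLeft_ι_mul {n : ℕ} (w : Fin n → M) (d : Fin n → Module.Dual R M)
    (v : M) (x : ExteriorAlgebra R M) :
    ∑ i, ι R (w i) * contractLeft (d i) (ι R v * x) =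
      ι R (∑ i, d i v • w i) * x + ι R v * ∑ i, ι R (w i) * contractLeft (d i) x := by
  simp only [map_sum, map_smul, Finset.sum_mul, Finset.mul_sum, ← Finset.sum_add_distrib]
  refine Finset.sum_congr rfl fun i _ => ?_
  have anticomm : ι R (w i) * ι R v = -(ι R v * ι R (w i)) :=
    eq_neg_of_add_eq_zero_left (ι_add_mul_swap _ _)
  rw [contractLeft_ι_mul, mul_sub, mul_smul_comm, smul_mul_assoc, ← mul_assoc, ← mul_assoc,
    anticomm, neg_mul, sub_neg_eq_add]

/-- Euler's identity: `V` contains the support of `x`, and `w`, `d` form a dual basis on `V`. -/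
theorem exists_fg_sum_ι_mul_contractLeft_eq {k : ℕ} {x : ExteriorAlgebra R M}
    (hx : x ∈ ⋀[R]^k M) :
    ∃ V : Submodule R M, V.FG ∧ ∀ {n : ℕ} (w : Fin n → M) (d : Fin n → Module.Dual R M),
      (∀ v ∈ V, ∑ i, d i v • w i = v) →
        ∑ i, ι R (w i) * contractLeft (d i) x = (k : R) • x := by
  induction hx using Submodule.pow_induction_on_left' with
  | algebraMap r => exact ⟨⊥, Submodule.fg_bot, by simp [contractLeft_algebraMap]⟩
  | add x y k _ _ ihx ihy =>
    obtain ⟨V, hV, hVx⟩ := ihx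
    obtain ⟨W, hW, hWy⟩ := ihy
    refine ⟨V ⊔ W, hV.sup hW, fun w d hwd => ?_⟩
    simp only [map_add, mul_add, Finset.sum_add_distrib, smul_add]
    rw [hVx w d fun v hv => hwd v (Submodule.mem_sup_left hv),
      hWy w d fun v hv => hwd v (Submodule.mem_sup_right hv)]
  | mem_mul _ hv k x _ ih =>
    obtain ⟨v, rfl⟩ := hv
    obtain ⟨V, hV, hVx⟩ := ih
    refine ⟨R ∙ v ⊔ V, (Submodule.fg_span_singleton v).sup hV, fun w d hwd => ?_⟩
    rw [sum_ι_mul_contractLeft_ι_mul,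
      hwd v (Submodule.mem_sup_left (Submodule.mem_span_singleton_self v)),
      hVx w d fun v hv => hwd v (Submodule.mem_sup_right hv), Nat.cast_succ, add_smul, one_smul,
      mul_smul_comm, add_comm]

end Contraction

section Separating

variable {K M N : Type*} [Field K] [AddCommGroup M] [Module K M] [AddCommGroup N] [Module K N]
  {B : N →ₗ[K] M →ₗ[K] K}

theorem exists_sum_smul_eq_of_separatingRight (hB : B.SeparatingRight) {V : Submodule K M}
    (hV : V.FG) :
    ∃ (n : ℕ) (w : Fin n → M) (u : Fin n → N), ∀ v ∈ V, ∑ i, B (u i) v • w i = v := by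
  have : FiniteDimensional K V := Module.Finite.iff_fg.2 hV
  let b := Module.finBasis K V
  have restrict_surjective : Function.Surjective (B.compl₂ V.subtype) := by
    refine LinearMap.flip_injective_iff₂.1 ((injective_iff_map_eq_zero _).2 fun v hv => ?_)
    exact Subtype.ext (hB v fun u => LinearMap.congr_fun hv u)
  choose u hu using fun i => restrict_surjective (b.coord i)
  refine ⟨_, fun i => b i, u, fun v hv => ?_⟩
  have coord_eq (i) : B (u i) v = b.repr ⟨v, hv⟩ i := LinearMap.congr_fun (hu i) ⟨v, hv⟩
  simpa only [coord_eq, map_sum, map_smul, Submodule.subtype_apply]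
    using congrArg V.subtype (b.sum_repr ⟨v, hv⟩)

theorem eq_zero_of_forall_contractLeft_eq_zero [CharZero K] (hB : B.SeparatingRight) {k : ℕ}
    {x : ExteriorAlgebra K M} (hx : x ∈ ⋀[K]^(k + 1) M) (h : ∀ u, contractLeft (B u) x = 0) :
    x = 0 := by
  obtain ⟨V, hV, euler⟩ := exists_fg_sum_ι_mul_contractLeft_eq hx
  obtain ⟨n, w, u, hwu⟩ := exists_sum_smul_eq_of_separatingRight hB hV
  have := euler w (fun i => B (u i)) hwu
  simp only [h, mul_zero, Finset.sum_const_zero] at this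
  exact (smul_eq_zero.1 this.symm).resolve_left (Nat.cast_ne_zero.2 k.succ_ne_zero)

end Separating

section Pairing

variable (R M : Type*) [CommRing R] [AddCommGroup M] [Module R M]

/-- The canonical symmetric pairing `⟨a + ξ, b + η⟩ = η a + ξ b` on `M ⊕ M*`; it is
`LinearMap.dualProd` with the two summands exchanged. -/
def canonicalPairing : LinearMap.BilinForm R (M × Module.Dual R M) :=
  (LinearMap.dualProd R M).compl₁₂ (LinearEquiv.prodComm R M (Module.Dual R M)).toLinearMap
    (LinearEquiv.prodComm R M (Module.Dual R M)).toLinearMap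

variable {R M}

theorem canonicalPairing_apply (u v : M × Module.Dual R M) :
    canonicalPairing R M u v = v.2 u.1 + u.2 v.1 := rfl

theorem canonicalPairing_comm (u v : M × Module.Dual R M) :
    canonicalPairing R M u v = canonicalPairing R M v u := add_comm _ _

theorem separatingRight_canonicalPairing [Module.Projective R M] :
    (canonicalPairing R M).SeparatingRight := by
  intro v hv
  refine Prod.ext ((Module.forall_dual_apply_eq_zero_iff R v.1).1 fun ξ => ?_)
    (LinearMap.ext fun a => ?_)
  · simpa [canonicalPairing_apply] using hv (0, ξ)
  · simpa [canonicalPairing_apply] using hv (a, 0)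

end Pairing

section DrinfeldDouble

variable {R M : Type*} [CommRing R] [AddCommGroup M] [Module R M]
  {bra : M →ₗ[R] M →ₗ[R] M}
  {cobra : Module.Dual R M →ₗ[R] Module.Dual R M →ₗ[R] Module.Dual R M}
  {D : M × Module.Dual R M →ₗ[R] M × Module.Dual R M →ₗ[R] M × Module.Dual R M}

/-- The identities which make a skew-symmetric bracket on `M` and a skew-symmetric bracket on its
dual into a Lie bialgebra: both Jacobi identities and the 1-cocycle condition, the latter in terms
of the bracket on the dual. -/
def LieBialgebraIdentities (bra : M →ₗ[R] M →ₗ[R] M)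
    (cobra : Module.Dual R M →ₗ[R] Module.Dual R M →ₗ[R] Module.Dual R M) : Prop :=
  (∀ a b c, bra (bra a b) c + bra (bra b c) a + bra (bra c a) b = 0) ∧
  (∀ ξ η ζ, cobra (cobra ξ η) ζ + cobra (cobra η ζ) ξ + cobra (cobra ζ ξ) η = 0) ∧
  (∀ a b ξ η, cobra ξ η (bra a b) =
    cobra (ξ ∘ₗ bra a) η b + cobra ξ (η ∘ₗ bra a) b
      - cobra (ξ ∘ₗ bra b) η a - cobra ξ (η ∘ₗ bra b) a)

/-- `D` is the bracket of the Drinfeld double of `bra` and `cobra`: the skew-symmetric bracket on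
`M ⊕ M*` which extends both and leaves the canonical pairing invariant. No Jacobi identity is
assumed. -/
structure IsDrinfeldDouble (bra : M →ₗ[R] M →ₗ[R] M)
    (cobra : Module.Dual R M →ₗ[R] Module.Dual R M →ₗ[R] Module.Dual R M)
    (D : M × Module.Dual R M →ₗ[R] M × Module.Dual R M →ₗ[R] M × Module.Dual R M) : Prop where
  skew : ∀ u v, D u v = -D v u
  invariant : ∀ u v w, canonicalPairing R M (D u v) w = -canonicalPairing R M v (D u w)
  inl_inl : ∀ a b, D (a, 0) (b, 0) = (bra a b, 0)
  inr_inr : ∀ ξ η, D (0, ξ) (0, η) = (0, cobra ξ η)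

/-- The Jacobi identity of an invariant bracket `D` paired with a fourth vector, as a quadrilinear
form whose skew-symmetry in all four arguments is visible. -/
def jacobiForm (D : M × Module.Dual R M →ₗ[R] M × Module.Dual R M →ₗ[R] M × Module.Dual R M)
    (u v w z : M × Module.Dual R M) : R :=
  canonicalPairing R M (D u v) (D w z) + canonicalPairing R M (D v w) (D u z)
    + canonicalPairing R M (D w u) (D v z)

namespace IsDrinfeldDouble

variable (h : IsDrinfeldDouble bra cobra D)
include h

theorem bra_skew (a b : M) : bra a b = -bra b a := by
  simpa [h.inl_inl] using congrArg Prod.fst (h.skew (a, 0) (b, 0))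

theorem cobra_skew (ξ η : Module.Dual R M) : cobra ξ η = -cobra η ξ := by
  simpa [h.inr_inr] using congrArg Prod.snd (h.skew (0, ξ) (0, η))

theorem snd_inl_inr (a : M) (ξ : Module.Dual R M) : (D (a, 0) (0, ξ)).2 = -(ξ ∘ₗ bra a) := by
  ext c
  simpa [canonicalPairing_apply, h.inl_inl] using h.invariant (a, 0) (0, ξ) (c, 0)

theorem apply_fst_inl_inr (a : M) (ξ η : Module.Dual R M) :
    η (D (a, 0) (0, ξ)).1 = cobra ξ η a := by
  rw [h.skew]
  simpa [canonicalPairing_apply, h.inr_inr, neg_eq_iff_eq_neg]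
    using h.invariant (0, ξ) (a, 0) (0, η)

theorem pairing_leibniz (u v w z : M × Module.Dual R M) :
    canonicalPairing R M (D u (D v w) - (D (D u v) w + D v (D u w))) z = -jacobiForm D u v w z := by
  rw [h.skew (D u v) w]
  simp only [map_sub, map_add, map_neg, LinearMap.sub_apply, LinearMap.add_apply,
    LinearMap.neg_apply, h.invariant, jacobiForm, h.skew w u]
  ring

theorem jacobiForm_swap₁₂ (u v w z : M × Module.Dual R M) :
    jacobiForm D v u w z = -jacobiForm D u v w z := by
  simp only [jacobiForm, h.skew v u, h.skew u w, h.skew w v, map_neg, LinearMap.neg_apply]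
  ring

theorem jacobiForm_swap₂₃ (u v w z : M × Module.Dual R M) :
    jacobiForm D u w v z = -jacobiForm D u v w z := by
  simp only [jacobiForm, h.skew u w, h.skew w v, h.skew v u, map_neg, LinearMap.neg_apply]
  ring

theorem jacobiForm_swap₃₄ (u v w z : M × Module.Dual R M) :
    jacobiForm D u v z w = -jacobiForm D u v w z := by
  simp only [jacobiForm, h.skew z w, h.skew z u, h.skew w u, map_neg, LinearMap.neg_apply,
    canonicalPairing_comm (D v z), canonicalPairing_comm (D u z)]
  ring

theorem jacobiForm_inl_inl_inl_inl (a b c d : M) :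
    jacobiForm D (a, 0) (b, 0) (c, 0) (d, 0) = 0 := by
  simp [jacobiForm, h.inl_inl, canonicalPairing_apply]

theorem jacobiForm_inl_inl_inl_inr (a b c : M) (ζ : Module.Dual R M) :
    jacobiForm D (a, 0) (b, 0) (c, 0) (0, ζ) =
      ζ (bra (bra a b) c + bra (bra b c) a + bra (bra c a) b) := by
  simp only [jacobiForm, h.inl_inl, canonicalPairing_apply, h.snd_inl_inr, LinearMap.neg_apply,
    LinearMap.comp_apply, LinearMap.zero_apply, add_zero, map_add, h.bra_skew (bra _ _), map_neg]

theorem jacobiForm_inl_inl_inr_inr (a b : M) (ξ η : Module.Dual R M) :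
    jacobiForm D (a, 0) (b, 0) (0, ξ) (0, η) =
      cobra ξ η (bra a b) - (cobra (ξ ∘ₗ bra a) η b + cobra ξ (η ∘ₗ bra a) b
        - cobra (ξ ∘ₗ bra b) η a - cobra ξ (η ∘ₗ bra b) a) := by
  simp only [jacobiForm, h.skew (0, ξ) (a, 0), h.inl_inl, h.inr_inr, canonicalPairing_apply,
    h.snd_inl_inr, LinearMap.neg_apply, map_neg, h.apply_fst_inl_inr,
    LinearMap.zero_apply, h.cobra_skew η]
  ring

theorem jacobiForm_inl_inr_inr_inr (a : M) (ξ η ζ : Module.Dual R M) :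
    jacobiForm D (a, 0) (0, ξ) (0, η) (0, ζ) =
      -(cobra (cobra ξ η) ζ + cobra (cobra η ζ) ξ + cobra (cobra ζ ξ) η) a := by
  simp only [jacobiForm, h.skew (0, η) (a, 0), h.inr_inr, canonicalPairing_apply,
    map_neg, map_zero, h.apply_fst_inl_inr, LinearMap.add_apply, h.cobra_skew ζ ξ,
    h.cobra_skew (cobra _ _), LinearMap.neg_apply]
  ring

theorem jacobiForm_inr_inr_inr_inr (ξ η ζ τ : Module.Dual R M) :
    jacobiForm D (0, ξ) (0, η) (0, ζ) (0, τ) = 0 := by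
  simp [jacobiForm, h.inr_inr, canonicalPairing_apply]

theorem jacobiForm_eq_zero (hLie : LieBialgebraIdentities bra cobra)
    (u v w z : M × Module.Dual R M) : jacobiForm D u v w z = 0 := by
  obtain ⟨jacobi, cojacobi, cocycle⟩ := hLie
  have add₁ (u u' v w z) : jacobiForm D (u + u') v w z =
      jacobiForm D u v w z + jacobiForm D u' v w z := by
    simp only [jacobiForm, map_add, LinearMap.add_apply]; ring
  have add₂ (u v v' w z) : jacobiForm D u (v + v') w z =
      jacobiForm D u v w z + jacobiForm D u v' w z := by
    simp only [jacobiForm, map_add, LinearMap.add_apply]; ring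
  have add₃ (u v w w' z) : jacobiForm D u v (w + w') z =
      jacobiForm D u v w z + jacobiForm D u v w' z := by
    simp only [jacobiForm, map_add, LinearMap.add_apply]; ring
  have add₄ (u v w z z') : jacobiForm D u v w (z + z') =
      jacobiForm D u v w z + jacobiForm D u v w z' := by
    simp only [jacobiForm, map_add]; ring
  rw [← Prod.fst_add_snd u, ← Prod.fst_add_snd v, ← Prod.fst_add_snd w, ← Prod.fst_add_snd z]
  simp only [add₁, add₂, add₃, add₄, h.jacobiForm_swap₁₂ (_, 0) (0, _),
    h.jacobiForm_swap₂₃ _ (_, 0) (0, _), h.jacobiForm_swap₃₄ _ _ (_, 0) (0, _),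
    h.jacobiForm_inl_inl_inl_inl, h.jacobiForm_inl_inl_inl_inr, h.jacobiForm_inl_inl_inr_inr,
    h.jacobiForm_inl_inr_inr_inr, h.jacobiForm_inr_inr_inr_inr, jacobi, cojacobi, cocycle,
    sub_self, map_zero, LinearMap.zero_apply, neg_zero, add_zero]

theorem lieBialgebraIdentities [Module.Projective R M] (h0 : ∀ u v w z, jacobiForm D u v w z = 0) :
    LieBialgebraIdentities bra cobra := by
  refine ⟨fun a b c => ?_, fun ξ η ζ => ?_, fun a b ξ η => ?_⟩
  · exact (Module.forall_dual_apply_eq_zero_iff R _).1 fun ζ =>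
      h.jacobiForm_inl_inl_inl_inr a b c ζ ▸ h0 _ _ _ _
  · ext a
    exact neg_eq_zero.1 (h.jacobiForm_inl_inr_inr_inr a ξ η ζ ▸ h0 _ _ _ _)
  · exact sub_eq_zero.1 (h.jacobiForm_inl_inl_inr_inr a b ξ η ▸ h0 _ _ _ _)

theorem leibniz_iff [Module.Projective R M] :
    (∀ u v w, D u (D v w) = D (D u v) w + D v (D u w)) ↔ LieBialgebraIdentities bra cobra := by
  refine ⟨fun hD => h.lieBialgebraIdentities fun u v w z => ?_, fun hLie u v w => ?_⟩
  · rw [← neg_eq_zero, ← h.pairing_leibniz, hD, sub_self, map_zero, LinearMap.zero_apply]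
  · refine sub_eq_zero.1 (separatingRight_canonicalPairing _ fun z => ?_)
    rw [canonicalPairing_comm, h.pairing_leibniz, h.jacobiForm_eq_zero hLie, neg_zero]

end IsDrinfeldDouble

end DrinfeldDouble

section BigBracket

variable {R M : Type*} [CommRing R] [AddCommGroup M] [Module R M]

/-- The axioms of the big bracket on `⋀(M ⊕ M*)`: the even Poisson superbracket of degree `-2`
which restricts to the canonical pairing on `M ⊕ M*`. -/
structure IsBigBracket (P : ExteriorAlgebra R (M × Module.Dual R M) →ₗ[R]
    ExteriorAlgebra R (M × Module.Dual R M) →ₗ[R]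
      ExteriorAlgebra R (M × Module.Dual R M)) : Prop where
  inl_inl : ∀ a b : M, P (ι R (a, 0)) (ι R (b, 0)) = 0
  inr_inr : ∀ ξ η : Module.Dual R M, P (ι R (0, ξ)) (ι R (0, η)) = 0
  inr_inl : ∀ (ξ : Module.Dual R M) (a : M),
    P (ι R (0, ξ)) (ι R (a, 0)) = algebraMap R _ (ξ a)
  skew : ∀ k l : ℕ, ∀ x ∈ ⋀[R]^k (M × Module.Dual R M), ∀ y ∈ ⋀[R]^l (M × Module.Dual R M),
    P x y = -((-1 : R) ^ (k * l) • P y x)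
  leibniz : ∀ k l : ℕ, ∀ x ∈ ⋀[R]^k (M × Module.Dual R M), ∀ y ∈ ⋀[R]^l (M × Module.Dual R M),
    ∀ z, P x (y * z) = P x y * z + (-1 : R) ^ (k * l) • (y * P x z)
  jacobi : ∀ k l : ℕ, ∀ x ∈ ⋀[R]^k (M × Module.Dual R M), ∀ y ∈ ⋀[R]^l (M × Module.Dual R M),
    ∀ z, P x (P y z) = P (P x y) z + (-1 : R) ^ (k * l) • P y (P x z)

/-- The derived bracket `⟦u, v⟧ = {{m, u}, v}` of an element `m` on `M ⊕ M*`. It is meaningful only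
for `m` of degree three, when `{{m, u}, v}` lies in `M ⊕ M*`. -/
noncomputable def derivedBracket (P : ExteriorAlgebra R (M × Module.Dual R M) →ₗ[R]
    ExteriorAlgebra R (M × Module.Dual R M) →ₗ[R] ExteriorAlgebra R (M × Module.Dual R M))
    (m : ExteriorAlgebra R (M × Module.Dual R M)) :
    M × Module.Dual R M →ₗ[R] M × Module.Dual R M →ₗ[R] M × Module.Dual R M :=
  (P.compl₁₂ (P m ∘ₗ ι R) (ι R)).compr₂ ιInv

variable {P : ExteriorAlgebra R (M × Module.Dual R M) →ₗ[R]
    ExteriorAlgebra R (M × Module.Dual R M) →ₗ[R] ExteriorAlgebra R (M × Module.Dual R M)}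
  {k l : ℕ} {x y m : ExteriorAlgebra R (M × Module.Dual R M)}

theorem derivedBracket_apply (u v : M × Module.Dual R M) :
    derivedBracket P m u v = ιInv (P (P m (ι R u)) (ι R v)) := rfl

theorem ι_mem_exteriorPower_one (u : M) : ι R u ∈ ⋀[R]^1 M := by
  rw [exteriorPower, pow_one]
  exact LinearMap.mem_range_self _ u

namespace IsBigBracket

variable (h : IsBigBracket P)
include h

theorem bracket_algebraMap (hx : x ∈ ⋀[R]^k (M × Module.Dual R M)) (r : R) :
    P x (algebraMap R _ r) = 0 := by
  have one_mem : (1 : ExteriorAlgebra R (M × Module.Dual R M)) ∈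
      ⋀[R]^0 (M × Module.Dual R M) := by
    rw [exteriorPower, pow_zero]
    exact Submodule.one_le.1 le_rfl
  have bracket_one : P x 1 = 0 := by
    simpa using h.leibniz k 0 x hx 1 one_mem 1
  rw [Algebra.algebraMap_eq_smul_one, map_smul, bracket_one, smul_zero]

theorem bracket_ι_ι (u v : M × Module.Dual R M) :
    P (ι R u) (ι R v) = algebraMap R _ (canonicalPairing R M u v) := by
  have inl_inr (a : M) (ξ : Module.Dual R M) :
      P (ι R (a, 0)) (ι R (0, ξ)) = algebraMap R _ (ξ a) := by
    simpa [h.inr_inl] using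
      h.skew 1 1 _ (ι_mem_exteriorPower_one (a, 0)) _ (ι_mem_exteriorPower_one (0, ξ))
  rw [canonicalPairing_apply, map_add, ← Prod.fst_add_snd u, ← Prod.fst_add_snd v]
  simp [-Prod.mk_add_mk, h.inl_inl, h.inr_inr, h.inr_inl, inl_inr, add_comm]

theorem bracket_ι (u : M × Module.Dual R M) (x : ExteriorAlgebra R (M × Module.Dual R M)) :
    P (ι R u) x = contractLeft (canonicalPairing R M u) x := by
  induction x using CliffordAlgebra.left_induction with
  | algebraMap r => rw [h.bracket_algebraMap (ι_mem_exteriorPower_one u), contractLeft_algebraMap]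
  | add x y hx hy => rw [map_add, map_add, hx, hy]
  | ι_mul x v hx =>
    have leibniz := h.leibniz 1 1 _ (ι_mem_exteriorPower_one u) _ (ι_mem_exteriorPower_one v) x
    rw [hx, h.bracket_ι_ι, ← Algebra.smul_def, mul_one, pow_one, neg_one_smul,
      ← sub_eq_add_neg] at leibniz
    exact leibniz.trans (contractLeft_ι_mul ..).symm

theorem bracket_ι_right (hx : x ∈ ⋀[R]^k (M × Module.Dual R M)) (u : M × Module.Dual R M) :
    P x (ι R u) = -((-1 : R) ^ k • contractLeft (canonicalPairing R M u) x) := by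
  rw [h.skew k 1 x hx _ (ι_mem_exteriorPower_one u), mul_one, h.bracket_ι]

theorem bracket_ι_right_mem (hx : x ∈ ⋀[R]^(k + 1) (M × Module.Dual R M))
    (u : M × Module.Dual R M) : P x (ι R u) ∈ ⋀[R]^k (M × Module.Dual R M) := by
  rw [h.bracket_ι_right hx]
  exact neg_mem (Submodule.smul_mem _ _ (contractLeft_mem_exteriorPower _ hx))

theorem bracket_mem (hx : x ∈ ⋀[R]^(k + 1) (M × Module.Dual R M))
    (hy : y ∈ ⋀[R]^(l + 1) (M × Module.Dual R M)) :
    P x y ∈ ⋀[R]^(k + l) (M × Module.Dual R M) := by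
  induction l generalizing y with
  | zero =>
    rw [zero_add, exteriorPower, pow_one] at hy
    obtain ⟨v, rfl⟩ := hy
    exact h.bracket_ι_right_mem hx v
  | succ l ih =>
    rw [exteriorPower, pow_succ'] at hy
    induction hy using Submodule.mul_induction_on' with
    | mem_mul_mem _ hv y hy =>
      obtain ⟨v, rfl⟩ := hv
      rw [h.leibniz _ 1 x hx _ (ι_mem_exteriorPower_one v)]
      refine add_mem ?_ (Submodule.smul_mem _ _ ?_)
      · rw [exteriorPower, pow_add]
        exact Submodule.mul_mem_mul (h.bracket_ι_right_mem hx v) hy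
      · rw [← add_assoc, exteriorPower, pow_succ']
        exact Submodule.mul_mem_mul ⟨v, rfl⟩ (ih hy)
    | add _ _ _ _ hy hz => exact map_add (P x) _ _ ▸ add_mem hy hz

theorem bracket_bracket_ι (hx : x ∈ ⋀[R]^(k + 1) (M × Module.Dual R M))
    (u v : M × Module.Dual R M) :
    P (P x (ι R u)) (ι R v) =
      contractLeft (canonicalPairing R M u) (contractLeft (canonicalPairing R M v) x) := by
  rw [h.bracket_ι_right (h.bracket_ι_right_mem hx u), h.bracket_ι_right hx, contractLeft_comm,
    map_neg, map_smul, smul_neg, smul_smul, neg_neg, pow_succ, mul_neg_one, mul_neg, neg_smul,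
    ← mul_pow, neg_one_mul, neg_neg, one_pow, one_smul]

theorem bracket_bracket_ι_swap (hx : x ∈ ⋀[R]^(k + 1) (M × Module.Dual R M))
    (u v : M × Module.Dual R M) :
    P (P x (ι R u)) (ι R v) = -P (P x (ι R v)) (ι R u) := by
  rw [h.bracket_bracket_ι hx, h.bracket_bracket_ι hx, contractLeft_comm]

theorem ι_derivedBracket (hm : m ∈ ⋀[R]^3 (M × Module.Dual R M)) (u v : M × Module.Dual R M) :
    ι R (derivedBracket P m u v) = P (P m (ι R u)) (ι R v) := by
  have mem := h.bracket_ι_right_mem (h.bracket_ι_right_mem hm u) v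
  rw [exteriorPower, pow_one] at mem
  obtain ⟨w, hw⟩ := mem
  rw [derivedBracket_apply, ← hw, ι_leftInverse w]

theorem derivedBracket_skew (hm : m ∈ ⋀[R]^3 (M × Module.Dual R M)) (u v : M × Module.Dual R M) :
    derivedBracket P m u v = -derivedBracket P m v u := by
  rw [derivedBracket_apply, h.bracket_bracket_ι_swap hm, map_neg, ← derivedBracket_apply]

theorem derivedBracket_invariant (hm : m ∈ ⋀[R]^3 (M × Module.Dual R M))
    (u v w : M × Module.Dual R M) :
    canonicalPairing R M (derivedBracket P m u v) w =
      -canonicalPairing R M v (derivedBracket P m u w) := by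
  rw [canonicalPairing_comm v]
  apply (algebraMap_leftInverse (R := R) (M × Module.Dual R M)).injective
  rw [map_neg, ← h.bracket_ι_ι, ← h.bracket_ι_ι, h.ι_derivedBracket hm, h.ι_derivedBracket hm,
    h.bracket_bracket_ι_swap (h.bracket_ι_right_mem hm u)]

theorem bracket_self_bracket_ι (hm : m ∈ ⋀[R]^3 (M × Module.Dual R M))
    (u v w : M × Module.Dual R M) :
    P (P (P (P m m) (ι R u)) (ι R v)) (ι R w) =
      (2 : R) • ι R (derivedBracket P m (derivedBracket P m u v) w
        + derivedBracket P m v (derivedBracket P m u w)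
        - derivedBracket P m u (derivedBracket P m v w)) := by
  have mem_two (u) : P m (ι R u) ∈ ⋀[R]^2 (M × Module.Dual R M) := h.bracket_ι_right_mem hm u
  have square : P (P m m) (ι R u) = (2 : R) • P m (P m (ι R u)) := by
    have := h.jacobi 3 3 m hm m hm (ι R u)
    rw [Odd.neg_one_pow (by decide), neg_one_smul, eq_add_neg_iff_add_eq] at this
    rw [← this, two_smul]
  have outer : P (P m (P m (ι R u))) (ι R v) =
      P m (ι R (derivedBracket P m u v)) - P (P m (ι R u)) (P m (ι R v)) := by
    have := h.jacobi 3 2 m hm _ (mem_two u) (ι R v)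
    rw [Even.neg_one_pow (by decide), one_smul, ← h.ι_derivedBracket hm] at this
    exact eq_sub_of_add_eq this.symm
  have inner : P (P (P m (ι R u)) (P m (ι R v))) (ι R w) =
      P (P m (ι R u)) (ι R (derivedBracket P m v w))
        - P (P m (ι R v)) (ι R (derivedBracket P m u w)) := by
    have := h.jacobi 2 2 _ (mem_two u) _ (mem_two v) (ι R w)
    rw [Even.neg_one_pow (by decide), one_smul, ← h.ι_derivedBracket hm v w,
      ← h.ι_derivedBracket hm u w] at this
    exact eq_sub_of_add_eq this.symm
  rw [square, map_smul, LinearMap.smul_apply, outer, map_smul, LinearMap.smul_apply, map_sub,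
    LinearMap.sub_apply, inner]
  simp only [← h.ι_derivedBracket hm, ← map_sub]
  congr 2
  abel

theorem bracket_add_self {μ γ : ExteriorAlgebra R (M × Module.Dual R M)}
    (hμ : μ ∈ ⋀[R]^3 (M × Module.Dual R M)) (hγ : γ ∈ ⋀[R]^3 (M × Module.Dual R M)) :
    P (μ + γ) (μ + γ) = P μ μ + (2 : R) • P μ γ + P γ γ := by
  have symm : P γ μ = P μ γ := by
    simpa [Odd.neg_one_pow (by decide : Odd 9)] using h.skew 3 3 γ hγ μ hμ
  simp only [map_add, LinearMap.add_apply, symm, two_smul]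
  abel

end IsBigBracket

end BigBracket

section CubicElements

variable {R M : Type*} [CommRing R] [AddCommGroup M] [Module R M]

/-- `μ ∈ M* ∧ M* ∧ M` is the cubic element of the bracket `bra` on `M`: its derived bracket
restricts to `bra`. -/
structure RepresentsBracket (P : ExteriorAlgebra R (M × Module.Dual R M) →ₗ[R]
    ExteriorAlgebra R (M × Module.Dual R M) →ₗ[R] ExteriorAlgebra R (M × Module.Dual R M))
    (bra : M →ₗ[R] M →ₗ[R] M) (μ : ExteriorAlgebra R (M × Module.Dual R M)) : Prop where
  mem_span : μ ∈ Submodule.span R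
    {x | ∃ (ξ η : Module.Dual R M) (a : M), x = ι R (0, ξ) * ι R (0, η) * ι R (a, 0)}
  bracket_inl_inl : ∀ a b, P (P μ (ι R (a, 0))) (ι R (b, 0)) = ι R (bra a b, 0)

/-- `γ ∈ M ∧ M ∧ M*` is the cubic element of the bracket `cobra` on `M*`: its derived bracket
restricts to `cobra`. -/
structure RepresentsCobracket (P : ExteriorAlgebra R (M × Module.Dual R M) →ₗ[R]
    ExteriorAlgebra R (M × Module.Dual R M) →ₗ[R] ExteriorAlgebra R (M × Module.Dual R M))
    (cobra : Module.Dual R M →ₗ[R] Module.Dual R M →ₗ[R] Module.Dual R M)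
    (γ : ExteriorAlgebra R (M × Module.Dual R M)) : Prop where
  mem_span : γ ∈ Submodule.span R
    {x | ∃ (a b : M) (ξ : Module.Dual R M), x = ι R (a, 0) * ι R (b, 0) * ι R (0, ξ)}
  bracket_inr_inr : ∀ ξ η, P (P γ (ι R (0, ξ))) (ι R (0, η)) = ι R (0, cobra ξ η)

theorem ι_mul_ι_mul_ι_mem_exteriorPower (u v w : M) : ι R u * ι R v * ι R w ∈ ⋀[R]^3 M := by
  rw [exteriorPower, pow_succ, pow_two]
  exact Submodule.mul_mem_mul (Submodule.mul_mem_mul ⟨u, rfl⟩ ⟨v, rfl⟩) ⟨w, rfl⟩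

variable {P : ExteriorAlgebra R (M × Module.Dual R M) →ₗ[R]
    ExteriorAlgebra R (M × Module.Dual R M) →ₗ[R] ExteriorAlgebra R (M × Module.Dual R M)}
  {bra : M →ₗ[R] M →ₗ[R] M}
  {cobra : Module.Dual R M →ₗ[R] Module.Dual R M →ₗ[R] Module.Dual R M}
  {μ γ : ExteriorAlgebra R (M × Module.Dual R M)}

theorem representsBracket_zero : RepresentsBracket P 0 0 :=
  ⟨zero_mem _, fun _ _ => by simp [← Prod.zero_eq_mk]⟩

theorem representsCobracket_zero : RepresentsCobracket P 0 0 :=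
  ⟨zero_mem _, fun _ _ => by simp [← Prod.zero_eq_mk]⟩

theorem RepresentsBracket.mem_exteriorPower (hμ : RepresentsBracket P bra μ) :
    μ ∈ ⋀[R]^3 (M × Module.Dual R M) := by
  refine Submodule.span_le.2 ?_ hμ.mem_span
  rintro _ ⟨ξ, η, a, rfl⟩
  exact ι_mul_ι_mul_ι_mem_exteriorPower _ _ _

theorem RepresentsCobracket.mem_exteriorPower (hγ : RepresentsCobracket P cobra γ) :
    γ ∈ ⋀[R]^3 (M × Module.Dual R M) := by
  refine Submodule.span_le.2 ?_ hγ.mem_span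
  rintro _ ⟨a, b, ξ, rfl⟩
  exact ι_mul_ι_mul_ι_mem_exteriorPower _ _ _

theorem RepresentsBracket.bracket_inr_inr (hμ : RepresentsBracket P bra μ) (h : IsBigBracket P)
    (ξ η : Module.Dual R M) : P (P μ (ι R (0, ξ))) (ι R (0, η)) = 0 := by
  rw [h.bracket_bracket_ι hμ.mem_exteriorPower, ← LinearMap.comp_apply, ← LinearMap.mem_ker]
  refine Submodule.span_le.2 ?_ hμ.mem_span
  rintro _ ⟨ξ', η', a, rfl⟩
  apply contractLeft_contractLeft_ι_mul_ι_mul_ι <;> simp [canonicalPairing_apply]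

theorem RepresentsCobracket.bracket_inl_inl (hγ : RepresentsCobracket P cobra γ)
    (h : IsBigBracket P) (a b : M) : P (P γ (ι R (a, 0))) (ι R (b, 0)) = 0 := by
  rw [h.bracket_bracket_ι hγ.mem_exteriorPower, ← LinearMap.comp_apply, ← LinearMap.mem_ker]
  refine Submodule.span_le.2 ?_ hγ.mem_span
  rintro _ ⟨a', b', ξ, rfl⟩
  apply contractLeft_contractLeft_ι_mul_ι_mul_ι <;> simp [canonicalPairing_apply]

theorem IsBigBracket.isDrinfeldDouble (h : IsBigBracket P) (hμ : RepresentsBracket P bra μ)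
    (hγ : RepresentsCobracket P cobra γ) :
    IsDrinfeldDouble bra cobra (derivedBracket P (μ + γ)) where
  skew := h.derivedBracket_skew (add_mem hμ.mem_exteriorPower hγ.mem_exteriorPower)
  invariant := h.derivedBracket_invariant (add_mem hμ.mem_exteriorPower hγ.mem_exteriorPower)
  inl_inl a b := by
    rw [derivedBracket_apply, map_add, LinearMap.add_apply, map_add, LinearMap.add_apply,
      hμ.bracket_inl_inl, hγ.bracket_inl_inl h, add_zero, ι_leftInverse]
  inr_inr ξ η := by
    rw [derivedBracket_apply, map_add, LinearMap.add_apply, map_add, LinearMap.add_apply,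
      hμ.bracket_inr_inr h, hγ.bracket_inr_inr, zero_add, ι_leftInverse]

end CubicElements

section MaurerCartan

variable {K M : Type*} [Field K] [CharZero K] [AddCommGroup M] [Module K M]
  {P : ExteriorAlgebra K (M × Module.Dual K M) →ₗ[K]
    ExteriorAlgebra K (M × Module.Dual K M) →ₗ[K] ExteriorAlgebra K (M × Module.Dual K M)}
  {bra : M →ₗ[K] M →ₗ[K] M}
  {cobra : Module.Dual K M →ₗ[K] Module.Dual K M →ₗ[K] Module.Dual K M}
  {m x μ γ : ExteriorAlgebra K (M × Module.Dual K M)}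

namespace IsBigBracket

variable (h : IsBigBracket P)
include h

theorem eq_zero_of_forall_bracket_ι_eq_zero {k : ℕ}
    (hx : x ∈ ⋀[K]^(k + 1) (M × Module.Dual K M)) (hx0 : ∀ u, P x (ι K u) = 0) : x = 0 := by
  refine eq_zero_of_forall_contractLeft_eq_zero separatingRight_canonicalPairing hx fun u => ?_
  rw [← h.bracket_ι, h.skew 1 _ _ (ι_mem_exteriorPower_one u) x hx, hx0, smul_zero, neg_zero]

theorem bracket_self_eq_zero_iff (hm : m ∈ ⋀[K]^3 (M × Module.Dual K M)) :
    P m m = 0 ↔ ∀ u v w, derivedBracket P m u (derivedBracket P m v w) =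
      derivedBracket P m (derivedBracket P m u v) w
        + derivedBracket P m v (derivedBracket P m u w) := by
  have mem_four : P m m ∈ ⋀[K]^4 (M × Module.Dual K M) := h.bracket_mem hm hm
  have mem_three (u) := h.bracket_ι_right_mem mem_four u
  have mem_two (u v) := h.bracket_ι_right_mem (mem_three u) v
  refine ⟨fun h0 u v w => ?_, fun leibniz => ?_⟩
  · have := h.bracket_self_bracket_ι hm u v w
    simp only [h0, map_zero, LinearMap.zero_apply] at this
    have := (smul_eq_zero.1 this.symm).resolve_left two_ne_zero
    exact (sub_eq_zero.1 ((ι_eq_zero_iff _).1 this)).symm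
  · refine h.eq_zero_of_forall_bracket_ι_eq_zero mem_four fun u =>
      h.eq_zero_of_forall_bracket_ι_eq_zero (mem_three u) fun v =>
        h.eq_zero_of_forall_bracket_ι_eq_zero (mem_two u v) fun w => ?_
    rw [h.bracket_self_bracket_ι hm, ← leibniz, sub_self, map_zero, smul_zero]

theorem lieBialgebra_iff_bracket_self_eq_zero (hμ : RepresentsBracket P bra μ)
    (hγ : RepresentsCobracket P cobra γ) :
    LieBialgebraIdentities bra cobra ↔ P (μ + γ) (μ + γ) = 0 := by
  rw [h.bracket_self_eq_zero_iff (add_mem hμ.mem_exteriorPower hγ.mem_exteriorPower),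
    (h.isDrinfeldDouble hμ hγ).leibniz_iff]

theorem jacobi_iff_bracket_self_eq_zero (hμ : RepresentsBracket P bra μ) :
    (∀ a b c, bra (bra a b) c + bra (bra b c) a + bra (bra c a) b = 0) ↔ P μ μ = 0 := by
  simpa [LieBialgebraIdentities] using
    h.lieBialgebra_iff_bracket_self_eq_zero hμ representsCobracket_zero

theorem cojacobi_iff_bracket_self_eq_zero (hγ : RepresentsCobracket P cobra γ) :
    (∀ ξ η ζ, cobra (cobra ξ η) ζ + cobra (cobra η ζ) ξ + cobra (cobra ζ ξ) η = 0) ↔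
      P γ γ = 0 := by
  simpa [LieBialgebraIdentities] using
    h.lieBialgebra_iff_bracket_self_eq_zero representsBracket_zero hγ

end IsBigBracket

theorem lie_bialgebra_iff_big_bracket_square_zero_general (h : IsBigBracket P)
    (hμ : RepresentsBracket P bra μ) (hγ : RepresentsCobracket P cobra γ) :
    (LieBialgebraIdentities bra cobra ↔ P (μ + γ) (μ + γ) = 0) ∧
    (P (μ + γ) (μ + γ) = 0 ↔ P μ μ = 0 ∧ P γ γ = 0 ∧ P μ γ = 0) := by
  have polarization := h.bracket_add_self hμ.mem_exteriorPower hγ.mem_exteriorPower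
  have hLie := h.lieBialgebra_iff_bracket_self_eq_zero hμ hγ
  refine ⟨hLie, fun hθ => ?_, fun ⟨hμμ, hγγ, hμγ⟩ => ?_⟩
  · obtain ⟨jacobi, cojacobi, -⟩ := hLie.2 hθ
    have hμμ := (h.jacobi_iff_bracket_self_eq_zero hμ).1 jacobi
    have hγγ := (h.cojacobi_iff_bracket_self_eq_zero hγ).1 cojacobi
    rw [hθ, hμμ, hγγ, zero_add, add_zero] at polarization
    exact ⟨hμμ, hγγ, (smul_eq_zero.1 polarization.symm).resolve_left two_ne_zero⟩
  · rw [polarization, hμμ, hγγ, hμγ, smul_zero, add_zero, add_zero]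

end MaurerCartan

/-- **Lie bialgebras via the big bracket.**
Let `g` be a finite dimensional real vector space and let `P = {·,·}` be the
"big bracket" on `W = Λ(g ⊕ g*)`: the (unique) even Poisson bracket of degree
`−2` extending the canonical pairing, i.e. vanishing on pairs of generators from
`g` and from `g*`, with `{ξ, a} = ξ(a)`, graded skew-symmetric, a graded
biderivation, and satisfying the graded Jacobi identity.  Let `bra` be a
skew-symmetric bracket on `g`, `cobra` a skew-symmetric bracket on `g*`, and let
`μ ∈ g* ∧ g* ∧ g` and `γ ∈ g ∧ g ∧ g*` be their representing cubic elements,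
characterized by `{{μ,a},b} = [a,b]` and `{{γ,ξ},η} = [ξ,η]_*`.
Then `g` and `g*` are abelian for the big bracket, and `(g, bra, cobra)` is a
Lie bialgebra (Jacobi for `bra`, Jacobi for `cobra`, and the 1-cocycle
compatibility) if and only if `{θ, θ} = 0` for `θ = μ + γ`; equivalently, if and
only if `{μ,μ} = {γ,γ} = {μ,γ} = 0`. -/
theorem lie_bialgebra_iff_big_bracket_square_zero
    {G : Type*} [AddCommGroup G] [Module ℝ G] [FiniteDimensional ℝ G]
    (P : ExteriorAlgebra ℝ (G × Module.Dual ℝ G) →ₗ[ℝ]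
      ExteriorAlgebra ℝ (G × Module.Dual ℝ G) →ₗ[ℝ]
        ExteriorAlgebra ℝ (G × Module.Dual ℝ G))
    -- values on generators
    (hgg : ∀ a b : G, P (ι ℝ (a, 0)) (ι ℝ (b, 0)) = 0)
    (hdd : ∀ ξ η : Module.Dual ℝ G, P (ι ℝ (0, ξ)) (ι ℝ (0, η)) = 0)
    (hdg : ∀ (ξ : Module.Dual ℝ G) (a : G),
      P (ι ℝ (0, ξ)) (ι ℝ (a, 0)) = algebraMap ℝ _ (ξ a))
    -- graded skew-symmetry
    (hskew : ∀ (k l : ℕ), ∀ x ∈ bbGrade G k, ∀ y ∈ bbGrade G l,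
      P x y = - ((-1 : ℝ) ^ (k * l) • P y x))
    -- biderivation property (Leibniz rule)
    (hleib : ∀ (k l : ℕ), ∀ x ∈ bbGrade G k, ∀ y ∈ bbGrade G l, ∀ z,
      P x (y * z) = P x y * z + (-1 : ℝ) ^ (k * l) • (y * P x z))
    -- graded Jacobi identity
    (hjac : ∀ (k l : ℕ), ∀ x ∈ bbGrade G k, ∀ y ∈ bbGrade G l, ∀ z,
      P x (P y z) = P (P x y) z + (-1 : ℝ) ^ (k * l) • P y (P x z))
    -- the bracket and cobracket and their representing cubic elements
    (bra : G →ₗ[ℝ] G →ₗ[ℝ] G) (hbra_skew : ∀ a b, bra a b = - bra b a)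
    (cobra : Module.Dual ℝ G →ₗ[ℝ] Module.Dual ℝ G →ₗ[ℝ] Module.Dual ℝ G)
    (hcobra_skew : ∀ ξ η, cobra ξ η = - cobra η ξ)
    (μ γ : ExteriorAlgebra ℝ (G × Module.Dual ℝ G))
    (hμmem : μ ∈ Submodule.span ℝ
      {x | ∃ (ξ η : Module.Dual ℝ G) (a : G), x = ι ℝ (0, ξ) * ι ℝ (0, η) * ι ℝ (a, 0)})
    (hγmem : γ ∈ Submodule.span ℝ
      {x | ∃ (a b : G) (ξ : Module.Dual ℝ G), x = ι ℝ (a, 0) * ι ℝ (b, 0) * ι ℝ (0, ξ)})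
    (hμrec : ∀ a b : G, P (P μ (ι ℝ (a, 0))) (ι ℝ (b, 0)) = ι ℝ (bra a b, 0))
    (hγrec : ∀ ξ η : Module.Dual ℝ G,
      P (P γ (ι ℝ (0, ξ))) (ι ℝ (0, η)) = ι ℝ (0, cobra ξ η)) :
    -- conclusions
    (∀ a b : G, P (ι ℝ (a, 0)) (ι ℝ (b, 0)) = 0) ∧
    (∀ ξ η : Module.Dual ℝ G, P (ι ℝ (0, ξ)) (ι ℝ (0, η)) = 0) ∧
    (((∀ a b c : G, bra (bra a b) c + bra (bra b c) a + bra (bra c a) b = 0) ∧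
      (∀ ξ η ζ : Module.Dual ℝ G,
        cobra (cobra ξ η) ζ + cobra (cobra η ζ) ξ + cobra (cobra ζ ξ) η = 0) ∧
      (∀ (a b : G) (ξ η : Module.Dual ℝ G),
        cobra ξ η (bra a b) =
          cobra (ξ ∘ₗ bra a) η b + cobra ξ (η ∘ₗ bra a) b
            - cobra (ξ ∘ₗ bra b) η a - cobra ξ (η ∘ₗ bra b) a)) ↔
      P (μ + γ) (μ + γ) = 0) ∧
    (P (μ + γ) (μ + γ) = 0 ↔ (P μ μ = 0 ∧ P γ γ = 0 ∧ P μ γ = 0)) := by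
  exact ⟨hgg, hdd, lie_bialgebra_iff_big_bracket_square_zero_general
    ⟨hgg, hdd, hdg, hskew, hleib, hjac⟩ ⟨hμmem, hμrec⟩ ⟨hγmem, hγrec⟩⟩
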